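/- arXiv:1911.08441 — 2 statements merged into one kernel-verified Lean document; each statement's English description precedes it below -/
import Mathlib

section
/- Let J̄ ⊆ P = K[y_1, …, y_n] be a monomial ideal and let J = Φ(J̄)S ⊆ S = K[x_1, …, x_n] be its extension under the K-algebra homomorphism Φ with Φ(y_i) = x_i^{ℓ_i}. Then S/J and P/J̄ have the same projective dimension; equivalently, sup{ h : Tor_h^S(S/J, S/(x_1, …, x_n)) ≠ 0 } = sup{ h : Tor_h^P(P/J̄, P/(y_1, …, y_n)) ≠ 0 }. -/
open CategoryTheory MvPolynomial

/-- `Tor_h^T(T/N, T/𝔪_T) ≠ 0` for `T = K[x_1,…,x_n]` with irrelevant maximal ideal `𝔪_T`. -/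
def torNonzero (K : Type) [Field K] (n : ℕ)
    (N : Ideal (MvPolynomial (Fin n) K)) (h : ℕ) : Prop :=
  Nontrivial
    (((Tor (ModuleCat (MvPolynomial (Fin n) K)) h).obj
        (ModuleCat.of _ (MvPolynomial (Fin n) K ⧸ N))).obj
      (ModuleCat.of _ (MvPolynomial (Fin n) K ⧸
        Ideal.span (Set.range (X : Fin n → MvPolynomial (Fin n) K)))))

section
variable {C D : Type*} [Category* C] [Category* D] [Abelian C] [Abelian D]

/-- An exact functor preserving projective objects preserves projective resolutions. -/
noncomputable def CategoryTheory.ProjectiveResolution.mapExact {X : C}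
    (P : ProjectiveResolution X) (F : C ⥤ D) [F.Additive] [F.PreservesHomology]
    [F.PreservesProjectiveObjects] : ProjectiveResolution (F.obj X) where
  complex := (F.mapHomologicalComplex _).obj P.complex
  projective n := F.projective_obj _
  π := (F.mapHomologicalComplex _).map P.π ≫
    (HomologicalComplex.singleMapHomologicalComplex F _ 0).hom.app X

/-- Left derived functors commute with an exact functor preserving projective objects. -/
noncomputable def CategoryTheory.Functor.leftDerivedObjIsoOfExact [EnoughProjectives C]
    [HasProjectiveResolutions D]
    (F : C ⥤ D) [F.Additive] [F.PreservesHomology] [F.PreservesProjectiveObjects]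
    (G : C ⥤ C) [G.Additive] (G' : D ⥤ D) [G'.Additive] (e : G ⋙ F ≅ F ⋙ G') (n : ℕ) (X : C) :
    F.obj ((G.leftDerived n).obj X) ≅ (G'.leftDerived n).obj (F.obj X) :=
  let P := projectiveResolution X
  F.mapIso (P.isoLeftDerivedObj G n) ≪≫
    ((((G.mapHomologicalComplex _).obj P.complex).sc n).mapHomologyIso F).symm ≪≫
    (HomologicalComplex.homologyFunctor D _ n).mapIso
      ((NatIso.mapHomologicalComplex e _).app P.complex) ≪≫
    ((P.mapExact F).isoLeftDerivedObj G' n).symm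
end

theorem Module.Projective.restrictScalars_of_projective (R S M : Type*) [CommSemiring R]
    [Semiring S] [Algebra R S] [AddCommMonoid M] [Module R M] [Module S M] [IsScalarTower R S M]
    [Module.Projective R S] [Module.Projective S M] : Module.Projective R M := by
  obtain ⟨s, hs⟩ := Module.projective_def'.1 ‹Module.Projective S M›
  have : Module.Projective R (M →₀ S) := by
    classical exact .of_equiv (finsuppLequivDFinsupp (ι := M) (M := S) R).symm
  exact Module.Projective.of_split (s.restrictScalars R)
    ((Finsupp.linearCombination S id).restrictScalars R) (LinearMap.ext fun m => congr($hs m))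

section
open TensorProduct

section
variable {R : Type*} (S M : Type*) [CommRing R] [CommRing S] [Algebra R S] [AddCommGroup M]
  [Module R M] [Module S M] [IsScalarTower R S M] (I : Ideal R)

/-- Tensoring an `S`-module with `S ⧸ IS` over `S` is tensoring with `R ⧸ I` over `R`. -/
noncomputable def quotientMapTensorEquiv :
    (S ⧸ I.map (algebraMap R S)) ⊗[S] M ≃ₗ[R] (R ⧸ I) ⊗[R] M :=
  ((TensorProduct.congr
      (Algebra.TensorProduct.quotIdealMapEquivTensorQuot S I).toLinearEquiv
      (LinearEquiv.refl S M)).restrictScalars R) ≪≫ₗ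
    ((TensorProduct.comm S (S ⊗[R] (R ⧸ I)) M).restrictScalars R) ≪≫ₗ
    ((AlgebraTensorModule.cancelBaseChange R S S M (R ⧸ I)).restrictScalars R) ≪≫ₗ
    TensorProduct.comm R M (R ⧸ I)

theorem quotientMapTensorEquiv_mk_tmul (s : S) (m : M) :
    quotientMapTensorEquiv S M I (Ideal.Quotient.mk _ s ⊗ₜ[S] m) = 1 ⊗ₜ[R] (s • m) := by
  simp [quotientMapTensorEquiv]

theorem quotientMapTensorEquiv_algebraMap_smul (r : R)
    (x : (S ⧸ I.map (algebraMap R S)) ⊗[S] M) :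
    quotientMapTensorEquiv S M I (algebraMap R S r • x) = r • quotientMapTensorEquiv S M I x := by
  rw [algebraMap_smul, map_smul]

variable {M} in
theorem quotientMapTensorEquiv_lTensor {N : Type*} [AddCommGroup N] [Module R N] [Module S N]
    [IsScalarTower R S N] (g : M →ₗ[S] N) (x : (S ⧸ I.map (algebraMap R S)) ⊗[S] M) :
    quotientMapTensorEquiv S N I (g.lTensor _ x) =
      (g.restrictScalars R).lTensor _ (quotientMapTensorEquiv S M I x) := by
  induction x using TensorProduct.induction_on with
  | zero => simp
  | add x y hx hy => simp only [map_add, hx, hy]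
  | tmul q m =>
    obtain ⟨s, rfl⟩ := Ideal.Quotient.mk_surjective q
    simp [quotientMapTensorEquiv_mk_tmul]
end

variable {R S : Type} [CommRing R] [CommRing S] (f : R →+* S)

theorem ModuleCat.preservesProjectiveObjects_restrictScalars
    (hf : letI := f.toAlgebra; Module.Projective R S) :
    (ModuleCat.restrictScalars.{0} f).PreservesProjectiveObjects where
  projective_obj {M} hM := by
    let := f.toAlgebra
    rw [← IsProjective.iff_projective] at hM
    let : Module R M := Module.compHom M f
    have : IsScalarTower R S M := ⟨fun r s m => by
      rw [Algebra.smul_def, mul_smul]; rfl⟩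
    have : Module.Projective R M := Module.Projective.restrictScalars_of_projective R S M
    exact (IsProjective.iff_projective (R := R) M).1 this

/-- A semilinear equivalence gives an isomorphism out of the restriction of scalars. -/
noncomputable def ModuleCat.restrictScalarsObjIso {M : ModuleCat.{0} S} {N : ModuleCat.{0} R}
    (e : M ≃+ N) (he : ∀ (r : R) (x : M), e (f r • x) = r • e x) :
    (restrictScalars.{0} f).obj M ≅ N :=
  let eR : (restrictScalars.{0} f).obj M ≃ₗ[R] N := { e with map_smul' := he }
  eR.toModuleIso

/-- The `R`-linear equivalence `S ⧸ IS ⊗ M ≃ R ⧸ I ⊗ M` for an `S`-module `M`. -/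
noncomputable def ModuleCat.tensorQuotientMapEquiv (I : Ideal R) (M : ModuleCat.{0} S) :
    ((MonoidalCategory.tensoringLeft (ModuleCat.{0} S)).obj (of S (S ⧸ I.map f)) ⋙
      restrictScalars.{0} f).obj M ≃ₗ[R]
    (restrictScalars.{0} f ⋙
      (MonoidalCategory.tensoringLeft (ModuleCat.{0} R)).obj (of R (R ⧸ I))).obj M :=
  letI := f.toAlgebra
  letI : Module R M := Module.compHom M f
  haveI : IsScalarTower R S M := ⟨fun r s m => by
    rw [Algebra.smul_def, mul_smul]; rfl⟩
  { toFun := quotientMapTensorEquiv S M I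
    invFun := (quotientMapTensorEquiv S M I).symm
    left_inv := (quotientMapTensorEquiv S M I).left_inv
    right_inv := (quotientMapTensorEquiv S M I).right_inv
    map_add' := map_add _
    map_smul' := quotientMapTensorEquiv_algebraMap_smul S M I }

/-- `S ⧸ IS ⊗ -` followed by restriction of scalars is restriction of scalars followed by
`R ⧸ I ⊗ -`. -/
noncomputable def ModuleCat.tensorQuotientMapIso (I : Ideal R) :
    (MonoidalCategory.tensoringLeft (ModuleCat.{0} S)).obj (of S (S ⧸ I.map f)) ⋙
      restrictScalars.{0} f ≅
    restrictScalars.{0} f ⋙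
      (MonoidalCategory.tensoringLeft (ModuleCat.{0} R)).obj (of R (R ⧸ I)) :=
  NatIso.ofComponents (fun M => (tensorQuotientMapEquiv f I M).toModuleIso)
    (fun {M N} g => by
      ext x
      let := f.toAlgebra
      let : Module R M := Module.compHom M f
      let : Module R N := Module.compHom N f
      have : IsScalarTower R S M := ⟨fun r s m => by
        rw [Algebra.smul_def, mul_smul]; rfl⟩
      have : IsScalarTower R S N := ⟨fun r s m => by
        rw [Algebra.smul_def, mul_smul]; rfl⟩
      exact quotientMapTensorEquiv_lTensor S I g.hom x)

end

theorem RingHom.projective_of_bijective_sum {ι R S : Type*} [CommRing R] [CommRing S]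
    (f : R →+* S) (s : ι → S)
    (h : Function.Bijective fun x : ι →₀ R => x.sum fun i r => f r * s i) :
    letI := f.toAlgebra
    Module.Projective R S := by
  let := f.toAlgebra
  have hs : ⇑(Finsupp.linearCombination R s) = fun x : ι →₀ R => x.sum fun i r => f r * s i := by
    ext x
    simp only [Finsupp.linearCombination_apply, Algebra.smul_def]
    rfl
  exact .of_equiv (LinearEquiv.ofBijective (Finsupp.linearCombination R s) (hs ▸ h))

section
variable {σ K : Type*} [Finite σ] [CommRing K] (ℓ : σ → ℕ)

/-- Coordinatewise Euclidean division of exponent vectors by positive integers `ℓ i`. -/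
noncomputable def exponentDivModEquiv (hℓ : ∀ i, 0 < ℓ i) :
    (Σ _ : {r : σ →₀ ℕ // ∀ i, r i < ℓ i}, σ →₀ ℕ) ≃ (σ →₀ ℕ) where
  toFun p := Finsupp.equivFunOnFinite.symm fun i => ℓ i * p.2 i + p.1.1 i
  invFun d := ⟨⟨Finsupp.equivFunOnFinite.symm fun i => d i % ℓ i,
    fun i => by simpa using Nat.mod_lt _ (hℓ i)⟩,
    Finsupp.equivFunOnFinite.symm fun i => d i / ℓ i⟩
  left_inv := by
    rintro ⟨⟨r, hr⟩, e⟩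
    simp only [Sigma.mk.injEq, Subtype.mk.injEq, heq_eq_eq]
    constructor <;> ext i
    · simp [Nat.mod_eq_of_lt (hr i)]
    · simp [Nat.mul_add_div (hℓ i), Nat.div_eq_of_lt (hr i)]
  right_inv d := by
    ext i
    simp [Nat.div_add_mod]

/-- Every polynomial is uniquely a sum of products `p (X i ^ ℓ i) * X ^ r` with `r < ℓ`. -/
theorem MvPolynomial.bijective_sum_aeval_X_pow_mul_monomial (hℓ : ∀ i, 0 < ℓ i) :
    Function.Bijective fun x : {r : σ →₀ ℕ // ∀ i, r i < ℓ i} →₀ MvPolynomial σ K =>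
      x.sum fun r p => (aeval fun i => (X i : MvPolynomial σ K) ^ ℓ i).toRingHom p *
        monomial r.1 (1 : K) := by
  let φ : MvPolynomial σ K →ₐ[K] MvPolynomial σ K := aeval fun i => X i ^ ℓ i
  let ι := {r : σ →₀ ℕ // ∀ i, r i < ℓ i}
  let T : (ι →₀ MvPolynomial σ K) →+ MvPolynomial σ K :=
    Finsupp.liftAddHom fun r =>
      (AddMonoidHom.mulRight (monomial r.1 (1 : K))).comp φ.toRingHom.toAddMonoidHom
  have hT : ∀ r p, T (Finsupp.single r p) = φ p * monomial r.1 1 := fun r p => by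
    simp [T]
  let b : Module.Basis (Σ _ : ι, σ →₀ ℕ) K (ι →₀ MvPolynomial σ K) :=
    Finsupp.basis fun _ => basisMonomials σ K
  let E := b.equiv (basisMonomials σ K) (exponentDivModEquiv ℓ hℓ)
  have hφ (c : K) (p : MvPolynomial σ K) : φ (c • p) = c • φ p := map_smul φ c p
  have hTK : ∀ (c : K) x, T (c • x) = c • T x := fun c x => by
    induction x using Finsupp.induction_linear with
    | zero => simp
    | add x y hx hy => simp only [smul_add, map_add, hx, hy]
    | single r p => rw [Finsupp.smul_single, hT, hT, hφ, smul_mul_assoc]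
  have hTE : ({ T with map_smul' := hTK } : (ι →₀ MvPolynomial σ K) →ₗ[K] _) = E := by
    refine b.ext ?_
    rintro ⟨r, e⟩
    change T (b ⟨r, e⟩) = E (b ⟨r, e⟩)
    rw [Module.Basis.equiv_apply, Finsupp.coe_basis, hT]
    have : (exponentDivModEquiv ℓ hℓ ⟨r, e⟩) =
        Finsupp.equivFunOnFinite.symm (fun i => ℓ i * e i) + r.1 := by
      ext i; simp [exponentDivModEquiv]
    simp only [coe_basisMonomials, this]
    have := Fintype.ofFinite σ
    simp [φ, monomial_eq, Finsupp.prod_fintype, pow_add, pow_mul,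
      Finset.prod_mul_distrib]
  have hE : ⇑T = ⇑E := _root_.funext fun x => LinearMap.congr_fun hTE x
  exact (hE ▸ E.bijective : Function.Bijective T)
end

theorem MvPolynomial.mk_aeval_X_pow {σ K : Type*} [CommRing K] (ℓ : σ → ℕ)
    (hℓ : ∀ i, 0 < ℓ i) (p : MvPolynomial σ K) :
    Ideal.Quotient.mk (Ideal.span (Set.range X)) (aeval (fun i => X i ^ ℓ i) p) =
      Ideal.Quotient.mk (Ideal.span (Set.range (X : σ → MvPolynomial σ K))) p := by
  have h : (Ideal.Quotient.mkₐ K (Ideal.span (Set.range (X : σ → MvPolynomial σ K)))).comp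
      (aeval fun i => X i ^ ℓ i) = Ideal.Quotient.mkₐ K _ := by
    ext i
    have hX : Ideal.Quotient.mk (Ideal.span (Set.range X)) (X i : MvPolynomial σ K) = 0 :=
      Ideal.Quotient.eq_zero_iff_mem.2 (Ideal.subset_span ⟨i, rfl⟩)
    simp [hX, (hℓ i).ne']
  exact congr($h p)

theorem MvPolynomial.aeval_X_pow_smul_quotient {σ K : Type*} [CommRing K] (ℓ : σ → ℕ)
    (hℓ : ∀ i, 0 < ℓ i) (p : MvPolynomial σ K)
    (x : MvPolynomial σ K ⧸ Ideal.span (Set.range (X : σ → MvPolynomial σ K))) :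
    (aeval (fun i => (X i : MvPolynomial σ K) ^ ℓ i) p : MvPolynomial σ K) • x = p • x := by
  obtain ⟨q, rfl⟩ := Ideal.Quotient.mk_surjective x
  change Ideal.Quotient.mk _ (_ * q) = Ideal.Quotient.mk _ (p * q)
  rw [map_mul, map_mul, mk_aeval_X_pow ℓ hℓ]

section
variable {K : Type} [Field K] {n : ℕ} (ℓ : Fin n → ℕ)

/-- The residue field at the irrelevant ideal, restricted along `X i ↦ X i ^ ℓ i`, is the residue
field at the irrelevant ideal. -/
noncomputable def restrictScalarsResidueFieldIso (hℓ : ∀ i, 0 < ℓ i) :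
    (ModuleCat.restrictScalars.{0}
      (aeval fun i => X i ^ ℓ i :
        MvPolynomial (Fin n) K →ₐ[K] MvPolynomial (Fin n) K).toRingHom).obj
        (ModuleCat.of _ (MvPolynomial (Fin n) K ⧸
          Ideal.span (Set.range (X : Fin n → MvPolynomial (Fin n) K)))) ≅
      ModuleCat.of _ (MvPolynomial (Fin n) K ⧸
        Ideal.span (Set.range (X : Fin n → MvPolynomial (Fin n) K))) :=
  ModuleCat.restrictScalarsObjIso _ (AddEquiv.refl _) (aeval_X_pow_smul_quotient ℓ hℓ)
end

/-- For a monomial ideal `J̄ ⊆ P = K[y_1,…,y_n]` and its extension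
`J = Φ(J̄)S` under the `K`-algebra map `Φ(y_i) = x_i^{ℓ_i}`, the quotients `S/J` and `P/J̄`
have the same projective dimension:
`sup{h : Tor_h^S(S/J, S/𝔪) ≠ 0} = sup{h : Tor_h^P(P/J̄, P/𝔪) ≠ 0}`. -/
theorem weighted_ideal_projective_dimension_eq
    (K : Type) [Field K] [Infinite K] (n : ℕ) (hn : 2 ≤ n)
    (ℓ : Fin n → ℕ) (hℓ : ∀ i, 0 < ℓ i)
    (Jbar : Ideal (MvPolynomial (Fin n) K))
    (hmono : ∃ A : Set (Fin n →₀ ℕ),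
      Jbar = Ideal.span ((fun d => (monomial d (1 : K) : MvPolynomial (Fin n) K)) '' A))
    (J : Ideal (MvPolynomial (Fin n) K))
    (hJ : J = Ideal.map
      (aeval (fun i : Fin n => (X i : MvPolynomial (Fin n) K) ^ ℓ i) :
        MvPolynomial (Fin n) K →ₐ[K] MvPolynomial (Fin n) K) Jbar) :
    sSup {h : ℕ | torNonzero K n J h} = sSup {h : ℕ | torNonzero K n Jbar h} := by
  subst hJ
  congr 1
  ext h
  let φ : MvPolynomial (Fin n) K →ₐ[K] MvPolynomial (Fin n) K := aeval fun i => X i ^ ℓ i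
  have := ModuleCat.preservesProjectiveObjects_restrictScalars φ.toRingHom
    (φ.toRingHom.projective_of_bijective_sum _
      (bijective_sum_aeval_X_pow_mul_monomial (K := K) ℓ hℓ))
  let e := Functor.leftDerivedObjIsoOfExact (ModuleCat.restrictScalars.{0} φ.toRingHom) _ _
      (ModuleCat.tensorQuotientMapIso φ.toRingHom Jbar) h _ ≪≫
    ((Tor _ h).obj _).mapIso (restrictScalarsResidueFieldIso ℓ hℓ)
  exact e.toLinearEquiv.toEquiv.nontrivial_congr
end

section
/- Let L_{j,i} ∈ R = K[x_0, x_1, …, x_n] (1 ≤ j ≤ n, 1 ≤ i ≤ ℓ_j, n ≥ 2) be linear forms satisfying condition (α), set f_j = ∏_{i=1}^{ℓ_j} L_{j,i} and I = (f_i f_j : 1 ≤ i < j ≤ n), and let Ω = (x_i^{ℓ_i} x_j^{ℓ_j} : 1 ≤ i < j ≤ n) ⊆ S = K[x_1, …, x_n]. Then for every h ≥ 0, dim_K Tor_h^R(R/I, R/(x_0, x_1, …, x_n)) = dim_K Tor_h^S(S/Ω, S/(x_1, …, x_n)); that is, the graded Betti numbers of a complete grid or pseudo-grid of lines coincide with those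 of the monomial ideal Ω. -/
open CategoryTheory MvPolynomial

/-- The dimension over `K` of (the carrier of) a module `M` over a `K`-algebra `R`. -/
noncomputable def kdim (K R : Type) [Field K] [CommRing R] [Algebra K R]
    (M : ModuleCat R) : Cardinal :=
  @Module.rank K M _ _ (Module.compHom M (algebraMap K R))

/-- `dim_K Tor_h^T(T/N, T/𝔪_T)` for `T = K[x_0,…,x_{m-1}]` with irrelevant maximal ideal
`𝔪_T`. -/
noncomputable def torBetti (K : Type) [Field K] (m : ℕ)
    (N : Ideal (MvPolynomial (Fin m) K)) (h : ℕ) : Cardinal :=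
  kdim K (MvPolynomial (Fin m) K)
    (((Tor (ModuleCat (MvPolynomial (Fin m) K)) h).obj
        (ModuleCat.of _ (MvPolynomial (Fin m) K ⧸ N))).obj
      (ModuleCat.of _ (MvPolynomial (Fin m) K ⧸
        Ideal.span (Set.range (X : Fin m → MvPolynomial (Fin m) K)))))

section Regular

variable {R : Type*} [CommRing R]

/-- The sequence `f 0, …, f (n - 1)` is weakly regular on the quotient of `R` by the ideal `J`. -/
def RegularModulo : (n : ℕ) → Ideal R → (Fin n → R) → Prop
  | 0, _, _ => True
  | n + 1, J, f => (∀ r, f 0 * r ∈ J → r ∈ J) ∧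
      RegularModulo n (J ⊔ Ideal.span {f 0}) (Fin.tail f)

theorem mem_sup_span_singleton_iff {J : Ideal R} {a x : R} :
    x ∈ J ⊔ Ideal.span {a} ↔ ∃ r, x - a * r ∈ J := by
  rw [Submodule.mem_sup]
  constructor
  · rintro ⟨y, hy, z, hz, rfl⟩
    obtain ⟨r, rfl⟩ := Ideal.mem_span_singleton'.1 hz
    exact ⟨r, by convert hy using 1; ring⟩
  · rintro ⟨r, hr⟩
    exact ⟨_, hr, a * r, Ideal.mul_mem_right _ _ (Ideal.mem_span_singleton_self a), by ring⟩

/-- Regularity on the outer terms of `0 → R/J₁ → R/J → R/J₂ → 0`, where the first map is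
multiplication by `a`, implies regularity on the middle term. -/
theorem RegularModulo.of_mul_mem_iff {a : R} : ∀ {n : ℕ} {J₁ J J₂ : Ideal R} {f : Fin n → R},
    (∀ r, a * r ∈ J ↔ r ∈ J₁) → J₂ = J ⊔ Ideal.span {a} →
    RegularModulo n J₁ f → RegularModulo n J₂ f → RegularModulo n J f
  | 0, _, _, _, _, _, _, _, _ => trivial
  | n + 1, J₁, J, J₂, f, h, h₂, hf₁, hf₂ => by
    subst h₂
    refine ⟨fun m hm => ?_, RegularModulo.of_mul_mem_iff (J₁ := J₁ ⊔ Ideal.span {f 0})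
      (fun m => ?_) (sup_right_comm _ _ _) hf₁.2 hf₂.2⟩
    · obtain ⟨r, hr⟩ := mem_sup_span_singleton_iff.1
        (hf₂.1 m (Ideal.mem_sup_left hm))
      have h1 : a * (f 0 * r) ∈ J := by
        convert J.sub_mem hm (J.mul_mem_left (f 0) hr) using 1; ring
      have h2 := (h r).2 (hf₁.1 r ((h _).1 h1))
      convert J.add_mem hr h2 using 1; ring
    · rw [mem_sup_span_singleton_iff, mem_sup_span_singleton_iff]
      constructor
      · rintro ⟨s, hs⟩
        have h1 : f 0 * s ∈ J ⊔ Ideal.span {a} :=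
          mem_sup_span_singleton_iff.2 ⟨m, by convert J.neg_mem hs using 1; ring⟩
        obtain ⟨r, hr⟩ := mem_sup_span_singleton_iff.1 (hf₂.1 s h1)
        refine ⟨r, (h _).1 ?_⟩
        convert J.add_mem hs (J.mul_mem_left (f 0) hr) using 1; ring
      · rintro ⟨s, hs⟩
        exact ⟨a * s, by convert (h _).2 hs using 1; ring⟩

theorem RegularModulo.mul {n : ℕ} {J : Ideal R} {a b : R} {f : Fin n → R}
    (ha : RegularModulo (n + 1) J (Fin.cons a f)) (hb : RegularModulo (n + 1) J (Fin.cons b f)) :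
    RegularModulo (n + 1) J (Fin.cons (a * b) f) := by
  simp only [RegularModulo, Fin.cons_zero, Fin.tail_cons] at ha hb ⊢
  refine ⟨fun r hr => hb.1 r (ha.1 _ (by rwa [← mul_assoc])),
    RegularModulo.of_mul_mem_iff (a := a) (fun r => ?_) ?_ hb.2 ha.2⟩
  · rw [mem_sup_span_singleton_iff, mem_sup_span_singleton_iff]
    refine exists_congr fun s => ⟨fun h => ha.1 _ ?_, fun h => ?_⟩
    · convert h using 1; ring
    · convert J.mul_mem_left a h using 1; ring
  · rw [sup_assoc, sup_eq_right.2 ((Ideal.span_singleton_le_iff_mem _).2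
      (Ideal.mul_mem_right _ _ (Ideal.mem_span_singleton_self a)))]

theorem RegularModulo.top : ∀ {n : ℕ} {f : Fin n → R}, RegularModulo n ⊤ f
  | 0, _ => trivial
  | _ + 1, _ => ⟨fun _ _ => trivial, by rw [top_sup_eq]; exact RegularModulo.top⟩

theorem RegularModulo.finset_prod {n : ℕ} {J : Ideal R} {ι : Type*} (s : Finset ι) {g : ι → R}
    {f : Fin n → R} (h : ∀ i ∈ s, RegularModulo (n + 1) J (Fin.cons (g i) f)) :
    RegularModulo (n + 1) J (Fin.cons (∏ i ∈ s, g i) f) := by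
  classical
  induction s using Finset.induction_on with
  | empty =>
    rw [Finset.prod_empty]
    refine ⟨fun r hr => by simpa using hr, ?_⟩
    simpa using RegularModulo.top
  | insert i s hi ih =>
    rw [Finset.prod_insert hi]
    exact (h i (Finset.mem_insert_self _ _)).mul
      (ih fun j hj => h j (Finset.mem_insert_of_mem hj))

/-- If every choice of factors gives a regular sequence, so do the products of the factors. -/
theorem RegularModulo.prod : ∀ {n : ℕ} {J : Ideal R} {ℓ : Fin n → ℕ}
    {L : (j : Fin n) → Fin (ℓ j) → R}, (∀ j, 0 < ℓ j) →
    (∀ c : (j : Fin n) → Fin (ℓ j), RegularModulo n J fun j => L j (c j)) →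
    RegularModulo n J fun j => ∏ i, L j i
  | 0, _, _, _, _, _ => trivial
  | n + 1, J, ℓ, L, hℓ, h => by
    rw [← Fin.cons_self_tail (fun j => ∏ i, L j i)]
    refine RegularModulo.finset_prod _ fun i _ => ?_
    have key : ∀ c : (j : Fin n) → Fin (ℓ j.succ),
        RegularModulo (n + 1) J (fun j => L j ((Fin.cons i c : (j : Fin (n + 1)) → Fin (ℓ j)) j)) :=
      fun c => h _
    exact ⟨(key fun j => ⟨0, hℓ j.succ⟩).1,
      RegularModulo.prod (L := fun j => L j.succ) (fun j => hℓ j.succ) fun c => (key c).2⟩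

theorem RegularModulo.map_equiv {S : Type*} [CommRing S] (φ : R ≃+* S) :
    ∀ {n : ℕ} {J : Ideal R} {f : Fin n → R},
    RegularModulo n J f → RegularModulo n (J.map φ) (φ ∘ f)
  | 0, _, _, _ => trivial
  | n + 1, J, f, h => by
    refine ⟨fun r hr => ?_, ?_⟩
    · obtain ⟨r, rfl⟩ := φ.surjective r
      have := h.1 r
      simp only [Function.comp_apply, ← map_mul] at hr
      rw [Ideal.mem_map_of_equiv] at hr ⊢
      obtain ⟨x, hx, hx'⟩ := hr
      exact ⟨r, this (φ.injective hx' ▸ hx), rfl⟩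
    · have := RegularModulo.map_equiv φ h.2
      rwa [Ideal.map_sup, Ideal.map_span, Set.image_singleton] at this

end Regular

section Variables

variable {K : Type*} [Field K]

theorem regularModulo_X {σ : Type*} : ∀ {n : ℕ} {s : Set σ} {v : Fin n → σ},
    Function.Injective v → (∀ i, v i ∉ s) →
    RegularModulo n (Ideal.span (X '' s : Set (MvPolynomial σ K))) fun i => X (v i)
  | 0, _, _, _, _ => trivial
  | n + 1, s, v, hv, hs => by
    refine ⟨fun r hr => ?_, ?_⟩
    · rw [mem_ideal_span_X_image] at hr ⊢
      intro m hm
      obtain ⟨i, hi, hne⟩ := hr (Finsupp.single (v 0) 1 + m) (by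
        rw [mem_support_iff] at hm ⊢
        rwa [coeff_X_mul])
      refine ⟨i, hi, ?_⟩
      have : v 0 ≠ i := fun h => hs 0 (h ▸ hi)
      simpa [Finsupp.single_apply, this] using hne
    · have := regularModulo_X (s := insert (v 0) s) (v := Fin.tail v)
        (hv.comp (Fin.succ_injective n)) (fun i => by
          rintro (h | h)
          · exact Fin.succ_ne_zero i (hv h)
          · exact hs _ h)
      rwa [Set.image_insert_eq, Ideal.span_insert, sup_comm] at this

/-- Linearly independent linear forms are a regular sequence. -/
theorem regularModulo_of_linearIndependent {m n : ℕ} {L : Fin n → MvPolynomial (Fin m) K}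
    (hL : ∀ j, (L j).IsHomogeneous 1) (hi : LinearIndependent K L) : RegularModulo n ⊥ L := by
  let b := Pi.basisFun K (Fin m)
  let e := SymmetricAlgebra.equivMvPolynomial b
  have hspan : ∀ j, ∃ v : Fin m → K, ∑ i, v i • X i = L j := fun j => by
    rw [← Submodule.mem_span_range_iff_exists_fun, ← homogeneousSubmodule_one_eq_span_X]
    exact hL j
  choose v hvL using hspan
  have he : ∀ j, e (SymmetricAlgebra.ι K _ (v j)) = L j := by
    intro j
    rw [← b.sum_repr (v j), map_sum, map_sum, ← hvL]
    simp only [map_smul, e, SymmetricAlgebra.equivMvPolynomial_ι_apply]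
    simp [b]
  have hv : LinearIndependent K v := by
    refine LinearIndependent.of_comp (e.toLinearMap ∘ₗ SymmetricAlgebra.ι K _) ?_
    have : (e.toLinearMap ∘ₗ SymmetricAlgebra.ι K _) ∘ v = L := funext he
    rwa [this]
  let b' := Module.Basis.extend hv.linearIndepOn_id
  let w : Fin n → hv.linearIndepOn_id.extend (Set.subset_univ _) := fun j =>
    ⟨v j, hv.linearIndepOn_id.subset_extend _ ⟨j, rfl⟩⟩
  have hw : Function.Injective w := fun i j h => hv.injective (congrArg Subtype.val h)
  let φ := (SymmetricAlgebra.equivMvPolynomial b').symm.trans e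
  have := (regularModulo_X (K := K) (s := ∅) hw (by simp)).map_equiv φ.toRingEquiv
  rw [Set.image_empty, Ideal.span_empty, Ideal.map_bot] at this
  convert this using 1
  ext1 j
  simp [φ, b', w, he]

end Variables

section QuotientTensor

open TensorProduct

variable {A R P Q : Type*} [CommRing A] [CommRing R] [Algebra A R] [AddCommGroup P] [Module R P]
  [Module A P] [IsScalarTower A R P] [AddCommGroup Q] [Module R Q] [Module A Q]
  [IsScalarTower A R Q] (J : Ideal A)

/-- Both `R/JR ⊗[R] P` and `A/J ⊗[A] P` are `P/JP`. -/
noncomputable def quotMapTensorEquiv (P : Type*) [AddCommGroup P] [Module R P]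
    [Module A P] [IsScalarTower A R P] :
    (R ⧸ J.map (algebraMap A R)) ⊗[R] P ≃+ (A ⧸ J) ⊗[A] P :=
  ((quotTensorEquivQuotSMul P (J.map (algebraMap A R))).toAddEquiv.trans
    (Submodule.Quotient.restrictScalarsEquiv A _).symm.toAddEquiv).trans
    ((Submodule.quotEquivOfEq _ _ (Ideal.smul_restrictScalars J (⊤ : Submodule R P))).trans
      (quotTensorEquivQuotSMul P J).symm).toAddEquiv

theorem quotMapTensorEquiv_tmul (r : R) (p : P) :
    quotMapTensorEquiv J P (Ideal.Quotient.mk _ r ⊗ₜ p) = 1 ⊗ₜ (r • p) := by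
  simp only [quotMapTensorEquiv, AddEquiv.trans_apply]
  erw [quotTensorEquivQuotSMul_mk_tmul]
  rfl

theorem quotMapTensorEquiv_smul (a : A) (x : (R ⧸ J.map (algebraMap A R)) ⊗[R] P) :
    quotMapTensorEquiv J P (algebraMap A R a • x) = a • quotMapTensorEquiv J P x := by
  induction x using TensorProduct.induction_on with
  | zero => simp
  | add x y hx hy => rw [smul_add, map_add, hx, hy, map_add, smul_add]
  | tmul r p =>
    obtain ⟨r, rfl⟩ := Ideal.Quotient.mk_surjective r
    rw [← tmul_smul, quotMapTensorEquiv_tmul, quotMapTensorEquiv_tmul, ← tmul_smul,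
      smul_comm, algebraMap_smul]

theorem quotMapTensorEquiv_lTensor (f : P →ₗ[R] Q) (x : (R ⧸ J.map (algebraMap A R)) ⊗[R] P) :
    quotMapTensorEquiv J Q (f.lTensor _ x) =
      (f.restrictScalars A).lTensor _ (quotMapTensorEquiv J P x) := by
  induction x using TensorProduct.induction_on with
  | zero => simp
  | add x y hx hy => simp [hx, hy]
  | tmul r p =>
    obtain ⟨r, rfl⟩ := Ideal.Quotient.mk_surjective r
    simp [quotMapTensorEquiv_tmul]

end QuotientTensor

section BaseChange

open MonoidalCategory

universe u
variable {A R : Type u} [CommRing A] [CommRing R] (φ : A →+* R)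

theorem restrictScalars_preservesProjectiveObjects
    (hφ : Module.Free A ((ModuleCat.restrictScalars φ).obj (ModuleCat.of R R))) :
    (ModuleCat.restrictScalars.{u} φ).PreservesProjectiveObjects where
  projective_obj {P} hP := by
    have hR : Module.Projective R P := ModuleCat.projective_of_module_projective P
    obtain ⟨s, hs⟩ := hR
    algebraize [φ]
    have : Module.Free A R := hφ
    let := Module.compHom P φ
    have : IsScalarTower A R P := ⟨fun a r p => by
      rw [Algebra.smul_def, mul_smul]; rfl⟩
    have : Module.Projective A P := Module.Projective.of_split (s.restrictScalars A)
      ((Finsupp.linearCombination R id).restrictScalars A) (LinearMap.ext hs)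
    exact ModuleCat.projective_of_categoryTheory_projective (ModuleCat.of A P)

/-- The restriction of scalars of a projective resolution, when restriction of scalars preserves
projective objects. -/
noncomputable def mapProjectiveResolution {N : ModuleCat.{u} R}
    (hφ : (ModuleCat.restrictScalars.{u} φ).PreservesProjectiveObjects)
    (P : ProjectiveResolution N) :
    ProjectiveResolution ((ModuleCat.restrictScalars.{u} φ).obj N) where
  complex := ((ModuleCat.restrictScalars.{u} φ).mapHomologicalComplex _).obj P.complex
  projective n := inferInstanceAs (Projective ((ModuleCat.restrictScalars φ).obj (P.complex.X n)))
  π := ((ModuleCat.restrictScalars.{u} φ).mapHomologicalComplex _).map P.π ≫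
    (HomologicalComplex.singleMapHomologicalComplex _ _ 0).hom.app N

/-- Left derived functors of additive functors that agree up to restriction of scalars agree up to
restriction of scalars. -/
noncomputable def leftDerivedRestrictScalarsIso
    (hφ : (ModuleCat.restrictScalars.{u} φ).PreservesProjectiveObjects)
    (G : ModuleCat.{u} A ⥤ ModuleCat.{u} A) (H : ModuleCat.{u} R ⥤ ModuleCat.{u} R)
    [G.Additive] [H.Additive]
    (e : H ⋙ ModuleCat.restrictScalars.{u} φ ≅ ModuleCat.restrictScalars.{u} φ ⋙ G)
    (N : ModuleCat.{u} R) (h : ℕ) :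
    (ModuleCat.restrictScalars.{u} φ).obj ((H.leftDerived h).obj N) ≅
      (G.leftDerived h).obj ((ModuleCat.restrictScalars.{u} φ).obj N) :=
  let P := projectiveResolution N
  let C := (H.mapHomologicalComplex (ComplexShape.down ℕ)).obj P.complex
  (ModuleCat.restrictScalars.{u} φ).mapIso (P.isoLeftDerivedObj H h) ≪≫
  ((C.sc h).mapHomologyIso (ModuleCat.restrictScalars.{u} φ)).symm ≪≫
  (HomologicalComplex.homologyFunctor _ _ h).mapIso
    ((NatIso.mapHomologicalComplex e (ComplexShape.down ℕ)).app P.complex) ≪≫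
  ((mapProjectiveResolution φ hφ P).isoLeftDerivedObj G h).symm

theorem isScalarTower_restrictScalars (P : ModuleCat.{u} R) :
    letI := φ.toAlgebra
    letI : Module A P := Module.compHom P φ
    IsScalarTower A R P :=
  letI := φ.toAlgebra
  letI : Module A P := Module.compHom P φ
  ⟨fun a r p => by rw [Algebra.smul_def, mul_smul]; rfl⟩

/-- The isomorphism `R/JR ⊗ P ≅ A/J ⊗ P` of `A`-modules. -/
noncomputable def tensorQuotientIso (J : Ideal A) (P : ModuleCat.{u} R) :
    (ModuleCat.restrictScalars φ).obj (ModuleCat.of R (R ⧸ J.map φ) ⊗ P) ≅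
      ModuleCat.of A (A ⧸ J) ⊗ (ModuleCat.restrictScalars φ).obj P :=
  letI := φ.toAlgebra
  letI : Module A P := Module.compHom P φ
  haveI : IsScalarTower A R P := isScalarTower_restrictScalars φ P
  let e : (ModuleCat.restrictScalars φ).obj (ModuleCat.of R (R ⧸ J.map φ) ⊗ P) ≃ₗ[A]
      (ModuleCat.of A (A ⧸ J) ⊗ (ModuleCat.restrictScalars φ).obj P : ModuleCat A) :=
    { quotMapTensorEquiv (A := A) (R := R) J P with
      map_smul' := quotMapTensorEquiv_smul (A := A) (R := R) (P := P) J }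
  e.toModuleIso

/-- Tensoring with `R/JR` over `R` is, after restriction of scalars, tensoring with `A/J`
over `A`. -/
noncomputable def tensorQuotientNatIso (J : Ideal A) :
    (tensoringLeft (ModuleCat.{u} R)).obj (ModuleCat.of R (R ⧸ J.map φ)) ⋙
        ModuleCat.restrictScalars.{u} φ ≅
      ModuleCat.restrictScalars.{u} φ ⋙
        (tensoringLeft (ModuleCat.{u} A)).obj (ModuleCat.of A (A ⧸ J)) :=
  NatIso.ofComponents (tensorQuotientIso φ J)
    fun {P Q} f => by
      let := φ.toAlgebra
      let : Module A P := Module.compHom P φ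
      have : IsScalarTower A R P := isScalarTower_restrictScalars φ P
      let : Module A Q := Module.compHom Q φ
      have : IsScalarTower A R Q := isScalarTower_restrictScalars φ Q
      ext x
      exact quotMapTensorEquiv_lTensor (A := A) J f.hom x

/-- If `R` is free over `A`, then `Tor` over `R` of `R/JR` is `Tor` over `A` of `A/J`. -/
noncomputable def torRestrictScalarsIso
    (hφ : Module.Free A ((ModuleCat.restrictScalars φ).obj (ModuleCat.of R R)))
    (J : Ideal A) (N : ModuleCat.{u} R) (h : ℕ) :
    (ModuleCat.restrictScalars φ).obj
        (((Tor (ModuleCat.{u} R) h).obj (ModuleCat.of R (R ⧸ J.map φ))).obj N) ≅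
      ((Tor (ModuleCat.{u} A) h).obj (ModuleCat.of A (A ⧸ J))).obj
        ((ModuleCat.restrictScalars φ).obj N) :=
  leftDerivedRestrictScalarsIso φ (restrictScalars_preservesProjectiveObjects φ hφ) _ _
    (tensorQuotientNatIso φ J) N h

end BaseChange

theorem kdim_restrictScalars {K A R : Type} [Field K] [CommRing A] [CommRing R] [Algebra K A]
    [Algebra K R] (φ : A →ₐ[K] R) (M : ModuleCat R) :
    kdim K A ((ModuleCat.restrictScalars φ.toRingHom).obj M) = kdim K R M := by
  unfold kdim
  have : Module.compHom M (algebraMap K R) =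
      @Module.compHom A K ((ModuleCat.restrictScalars φ.toRingHom).obj M) _ _ _ _
        (algebraMap K A) := by
    refine Module.ext' _ _ fun r x => ?_
    change algebraMap K R r • x = (φ (algebraMap K A r)) • x
    rw [φ.commutes]
  rw [this]
  rfl

theorem kdim_eq_of_iso {K R : Type} [Field K] [CommRing R] [Algebra K R] {M N : ModuleCat R}
    (e : M ≅ N) : kdim K R M = kdim K R N := by
  let : Module K M := Module.compHom M (algebraMap K R)
  let : Module K N := Module.compHom N (algebraMap K R)
  let e' : M ≃ₗ[K] N :=
    { e.toLinearEquiv.toAddEquiv with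
      map_smul' := fun r x => e.toLinearEquiv.map_smul (algebraMap K R r) x }
  exact e'.rank_eq

/-- If `R` is free over `A`, then `Tor` over `R` of `R/JR` and `N` has the same dimension over `K`
as `Tor` over `A` of `A/J` and `N`. -/
theorem kdim_tor_eq_of_free {K A R : Type} [Field K] [CommRing A] [CommRing R] [Algebra K A]
    [Algebra K R] (φ : A →ₐ[K] R)
    (hφ : Module.Free A ((ModuleCat.restrictScalars φ.toRingHom).obj (ModuleCat.of R R)))
    (J : Ideal A) {N : ModuleCat.{0} R} {M : ModuleCat.{0} A}
    (e : (ModuleCat.restrictScalars φ.toRingHom).obj N ≅ M) (h : ℕ) :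
    kdim K R (((Tor (ModuleCat R) h).obj (ModuleCat.of R (R ⧸ J.map φ.toRingHom))).obj N) =
      kdim K A (((Tor (ModuleCat A) h).obj (ModuleCat.of A (A ⧸ J))).obj M) :=
  (kdim_restrictScalars φ _).symm.trans <| kdim_eq_of_iso <|
    torRestrictScalarsIso φ.toRingHom hφ J N h ≪≫
      ((Tor (ModuleCat A) h).obj (ModuleCat.of A (A ⧸ J))).mapIso e

section Free

theorem linearIndependent_pow_mul {K R ι : Type*} [Field K] [CommRing R] [Algebra K R]
    {J : Ideal R} {a : R} (ha : ∀ r, a * r ∈ J → r ∈ J) {v : ι → R}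
    (hv : LinearIndependent K fun i => Ideal.Quotient.mk (J ⊔ Ideal.span {a}) (v i)) :
    LinearIndependent K fun x : ℕ × ι => Ideal.Quotient.mk J (a ^ x.1 * v x.2) := by
  classical
  have hsmul : ∀ (I : Ideal R) (c : K) (r : R),
      c • Ideal.Quotient.mk I r = Ideal.Quotient.mk I (c • r) := fun _ _ _ => rfl
  have key : ∀ (t : Finset ι) (N : ℕ) (p : ℕ → ι → K),
      ∑ k ∈ Finset.range N, a ^ k * ∑ i ∈ t, p k i • v i ∈ J →
      ∀ k ∈ Finset.range N, ∀ i ∈ t, p k i = 0 := by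
    intro t N
    induction N with
    | zero => simp
    | succ N ih =>
      intro p hp
      have hsplit : ∑ k ∈ Finset.range (N + 1), a ^ k * ∑ i ∈ t, p k i • v i =
          ∑ i ∈ t, p 0 i • v i +
            a * ∑ k ∈ Finset.range N, a ^ k * ∑ i ∈ t, p (k + 1) i • v i := by
        rw [Finset.sum_range_succ', add_comm, Finset.mul_sum (Finset.range N)]
        simp only [pow_succ', mul_assoc, pow_zero, one_mul]
      rw [hsplit] at hp
      have h0 : ∀ i ∈ t, p 0 i = 0 := by
        refine linearIndependent_iff'.1 hv t (p 0) ?_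
        simp_rw [hsmul]
        rw [← map_sum, Ideal.Quotient.eq_zero_iff_mem, mem_sup_span_singleton_iff]
        exact ⟨-∑ k ∈ Finset.range N, a ^ k * ∑ i ∈ t, p (k + 1) i • v i,
          by convert hp using 1; ring⟩
      rw [Finset.sum_eq_zero fun i hi => by rw [h0 i hi, zero_smul], zero_add] at hp
      have hs := ih (fun k => p (k + 1)) (ha _ hp)
      intro k hk
      cases k with
      | zero => exact h0
      | succ k => exact hs k (by simpa using hk)
  rw [linearIndependent_iff'']
  intro s g hg hsum x
  by_contra hx
  have hxs : x ∈ s := by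
    by_contra h
    exact hx (hg x h)
  obtain ⟨N, hN⟩ := (s.image Prod.fst).exists_nat_subset_range
  refine hx (key (s.image Prod.snd) N (fun k i => g (k, i)) ?_ x.1
    (hN (Finset.mem_image_of_mem _ hxs)) x.2 (Finset.mem_image_of_mem _ hxs))
  rw [← Ideal.Quotient.eq_zero_iff_mem, ← hsum]
  simp_rw [hsmul, ← map_sum, Finset.mul_sum, mul_smul_comm]
  rw [← Finset.sum_product' (f := fun k i => g (k, i) • (a ^ k * v i))]
  refine congrArg _ (Finset.sum_subset (fun y hy => ?_) fun y _ hy => ?_).symm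
  · exact Finset.mem_product.2
      ⟨hN (Finset.mem_image_of_mem _ hy), Finset.mem_image_of_mem _ hy⟩
  · rw [hg y hy, zero_smul]

theorem RegularModulo.linearIndependent {K R ι : Type*} [Field K] [CommRing R] [Algebra K R]
    {v : ι → R} : ∀ {n : ℕ} {J : Ideal R} {f : Fin n → R}, RegularModulo n J f →
    LinearIndependent K (fun i => Ideal.Quotient.mk (J ⊔ Ideal.span (Set.range f)) (v i)) →
    LinearIndependent K fun x : (Fin n → ℕ) × ι =>
      Ideal.Quotient.mk J ((∏ j, f j ^ x.1 j) * v x.2)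
  | 0, J, f, _, hv => by
    have hJ : J ⊔ Ideal.span (Set.range f) = J := by simp
    rw [hJ] at hv
    have := hv.comp (Prod.snd : (Fin 0 → ℕ) × ι → ι) fun x y h =>
      Prod.ext (Subsingleton.elim _ _) h
    simpa [Function.comp_def] using this
  | n + 1, J, f, hf, hv => by
    have hJ : J ⊔ Ideal.span (Set.range f) =
        (J ⊔ Ideal.span {f 0}) ⊔ Ideal.span (Set.range (Fin.tail f)) := by
      rw [sup_assoc, ← Ideal.span_union, Set.singleton_union, ← Fin.range_cons,
        Fin.cons_self_tail]
    rw [hJ] at hv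
    have := (linearIndependent_pow_mul hf.1 (hf.2.linearIndependent hv)).comp
      (fun x : (Fin (n + 1) → ℕ) × ι => (x.1 0, (Fin.tail x.1, x.2))) fun x y h => by
        simp only [Prod.mk.injEq] at h
        refine Prod.ext ?_ h.2.2
        rw [← Fin.cons_self_tail x.1, ← Fin.cons_self_tail y.1, h.1, h.2.1]
    convert this using 2 with x
    simp [Fin.prod_univ_succ, Fin.tail, mul_assoc]

theorem homogeneousComponent_mul_of_isHomogeneous {K σ : Type*} [Field K] {d e : ℕ}
    {p : MvPolynomial σ K} (hp : p.IsHomogeneous e) (q : MvPolynomial σ K) :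
    homogeneousComponent d (q * p) =
      if e ≤ d then homogeneousComponent (d - e) q * p else 0 := by
  let := MvPolynomial.gradedAlgebra (σ := σ) (R := K)
  have := DirectSum.coe_decompose_mul_of_right_mem (homogeneousSubmodule σ K) d (a := q) hp
  erw [decomposition.decompose'_apply, decomposition.decompose'_apply] at this
  exact this

theorem free_of_regularModulo {K σ : Type*} [Field K] {n : ℕ} {f : Fin n → MvPolynomial σ K}
    {d : Fin n → ℕ} (hd : ∀ j, 0 < d j) (hf : ∀ j, (f j).IsHomogeneous (d j))
    (hreg : RegularModulo n ⊥ f) :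
    letI := (aeval (R := K) f).toRingHom.toAlgebra
    Module.Free (MvPolynomial (Fin n) K) (MvPolynomial σ K) := by
  let := (aeval (R := K) f).toRingHom.toAlgebra
  have : IsScalarTower K (MvPolynomial (Fin n) K) (MvPolynomial σ K) :=
    IsScalarTower.of_algebraMap_eq fun r => ((aeval (R := K) f).commutes r).symm
  let I := Ideal.span (Set.range f)
  obtain ⟨κ, a, -, hspan, hli⟩ := exists_linearIndependent' K
    fun s : σ →₀ ℕ => Ideal.Quotient.mk I (monomial s 1)
  let e : κ → MvPolynomial σ K := fun k => monomial (a k) 1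
  have htop : Submodule.span K (Set.range fun s : σ →₀ ℕ =>
      Ideal.Quotient.mk I (monomial s (1 : K))) = ⊤ := by
    have h1 := (basisMonomials σ K).span_eq
    have h2 := congrArg (Submodule.map (Ideal.Quotient.mkₐ K I).toLinearMap) h1
    rw [Submodule.map_span, ← Set.range_comp, Submodule.map_top,
      LinearMap.range_eq_top.2 (Ideal.Quotient.mkₐ_surjective K I)] at h2
    rw [← h2, coe_basisMonomials]
    rfl
  have hmod : ∀ p, ∃ q ∈ Submodule.span K (Set.range e), p - q ∈ I := by
    intro p
    have h1 : Ideal.Quotient.mk I p ∈ Submodule.map (Ideal.Quotient.mkₐ K I).toLinearMap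
        (Submodule.span K (Set.range e)) := by
      rw [Submodule.map_span, ← Set.range_comp]
      change _ ∈ Submodule.span K (Set.range
        ((fun s : σ →₀ ℕ => Ideal.Quotient.mk I (monomial s (1 : K))) ∘ a))
      rw [hspan, htop]
      trivial
    obtain ⟨q, hq, hqp⟩ := h1
    exact ⟨q, hq, Ideal.Quotient.eq.1 hqp.symm⟩
  let T := Submodule.span (MvPolynomial (Fin n) K) (Set.range e)
  have hsub : Submodule.span K (Set.range e) ≤ T.restrictScalars K :=
    Submodule.span_le.2 Submodule.subset_span
  have hcomp : ∀ (i : ℕ), ∀ q ∈ Submodule.span K (Set.range e),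
      homogeneousComponent i q ∈ Submodule.span K (Set.range e) := by
    intro i
    refine (Submodule.span_le (p := (Submodule.span K (Set.range e)).comap _)).2 ?_
    rintro _ ⟨k, rfl⟩
    rw [SetLike.mem_coe, Submodule.mem_comap,
      homogeneousComponent_of_mem (isHomogeneous_monomial 1 rfl)]
    split_ifs
    · exact Submodule.subset_span ⟨k, rfl⟩
    · exact zero_mem _
  have hmul : ∀ j, ∀ p ∈ T, p * f j ∈ T := fun j p hp => by
    have : p * f j = (X j : MvPolynomial (Fin n) K) • p := by
      rw [Algebra.smul_def, mul_comm]
      exact congrArg (· * p) (aeval_X f j).symm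
    rw [this]
    exact T.smul_mem _ hp
  have hhom : ∀ i, ∀ p : MvPolynomial σ K, p.IsHomogeneous i → p ∈ T := by
    intro i
    induction i using Nat.strong_induction_on with
    | _ i ih =>
      intro p hp
      obtain ⟨q, hq, hpq⟩ := hmod p
      obtain ⟨c, hc⟩ := Ideal.mem_span_range_iff_exists_fun.1 hpq
      have h1 : p = homogeneousComponent i q + ∑ j, homogeneousComponent i (c j * f j) := by
        rw [← map_sum, hc, ← map_add, add_sub_cancel, homogeneousComponent_eq_self hp]
      rw [h1]
      refine add_mem (hsub (hcomp i q hq)) (sum_mem fun j _ => ?_)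
      rw [homogeneousComponent_mul_of_isHomogeneous (hf j)]
      split_ifs with h
      · exact hmul j _ (ih _ (by have := hd j; lia) _ (homogeneousComponent_isHomogeneous _ _))
      · exact zero_mem _
  have hT : ⊤ ≤ T := fun p _ => by
    rw [← sum_homogeneousComponent p]
    exact sum_mem fun i _ => hhom i _ (homogeneousComponent_isHomogeneous _ _)
  have hK : LinearIndependent K fun x : (Fin n → ℕ) × κ => (∏ j, f j ^ x.1 j) * e x.2 := by
    have h1 : LinearIndependent K fun k => Ideal.Quotient.mk (⊥ ⊔ I) (e k) := by
      rw [bot_sup_eq]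
      exact hli
    exact (hreg.linearIndependent h1).of_comp (Ideal.Quotient.mkₐ K ⊥).toLinearMap
  have hA : LinearIndependent (MvPolynomial (Fin n) K) e := by
    rw [linearIndependent_iff]
    intro c hc
    let b := Finsupp.basis fun _ : κ => basisMonomials (Fin n) K
    let Φ := (Finsupp.linearCombination (MvPolynomial (Fin n) K) e).restrictScalars K
    have hb : LinearIndependent K (Φ ∘ b) := by
      have := hK.comp (fun x : (Σ _ : κ, Fin n →₀ ℕ) => (⇑x.2, x.1)) fun x y h => by
        rcases x with ⟨k, s⟩
        rcases y with ⟨l, t⟩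
        simp only [Prod.mk.injEq, DFunLike.coe_fn_eq] at h
        rw [h.1, h.2]
      suffices hx : Φ ∘ b = fun x => (∏ j, f j ^ x.2 j) * e x.1 by
        rw [hx]
        exact this
      funext x
      simp only [Function.comp_apply, Φ, b, LinearMap.coe_restrictScalars, Finsupp.coe_basis,
        coe_basisMonomials, Finsupp.linearCombination_single, Algebra.smul_def]
      congr 1
      refine (aeval_monomial f x.2 1).trans ?_
      simp [Finsupp.prod_fintype]
    have h0 : b.repr c = 0 := by
      refine linearIndependent_iff.1 hb _ ?_
      rw [← Finsupp.apply_linearCombination, b.linearCombination_repr]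
      exact hc
    exact b.repr.map_eq_zero_iff.1 h0
  exact Module.Free.of_basis (Module.Basis.mk hA hT)

end Free

section ResidueField

theorem mem_span_range_X_iff {K σ : Type*} [Field K] {p : MvPolynomial σ K} :
    p ∈ Ideal.span (Set.range (X : σ → MvPolynomial σ K)) ↔ constantCoeff p = 0 := by
  rw [← Set.image_univ, mem_ideal_span_X_image, constantCoeff_eq]
  constructor
  · intro h
    by_contra h0
    obtain ⟨i, -, hi⟩ := h 0 (mem_support_iff.2 h0)
    exact hi rfl
  · intro h s hs
    by_contra! hs'
    have : s = 0 := Finsupp.ext fun i => hs' i trivial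
    exact mem_support_iff.1 hs (this ▸ h)

/-- The residue field of a polynomial ring, restricted along a homomorphism sending the variables
to polynomials without constant term, is the residue field. -/
theorem nonempty_residueField_iso {K σ τ : Type} [Field K] {f : τ → MvPolynomial σ K}
    (hf : ∀ j, constantCoeff (f j) = 0) :
    Nonempty ((ModuleCat.restrictScalars (aeval (R := K) f).toRingHom).obj
      (ModuleCat.of _ (MvPolynomial σ K ⧸
        Ideal.span (Set.range (X : σ → MvPolynomial σ K)))) ≅
      ModuleCat.of _ (MvPolynomial τ K ⧸
        Ideal.span (Set.range (X : τ → MvPolynomial τ K)))) := by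
  let M := (ModuleCat.restrictScalars (aeval (R := K) f).toRingHom).obj
      (ModuleCat.of _ (MvPolynomial σ K ⧸ Ideal.span (Set.range (X : σ → MvPolynomial σ K))))
  let g : MvPolynomial τ K →ₗ[MvPolynomial τ K] M := LinearMap.toSpanSingleton _ M
    (Ideal.Quotient.mk (Ideal.span (Set.range (X : σ → MvPolynomial σ K))) 1)
  have hg : ∀ p, g p = Ideal.Quotient.mk (Ideal.span (Set.range (X : σ → MvPolynomial σ K)))
      (aeval (R := K) f p) := fun p => congrArg (Ideal.Quotient.mk _) (mul_one (aeval f p))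
  have hcc : (constantCoeff (R := K)).comp (aeval (R := K) f).toRingHom = constantCoeff :=
    ringHom_ext (by simp) (by simp [hf])
  have hker : LinearMap.ker g = Ideal.span (Set.range (X : τ → MvPolynomial τ K)) := by
    ext p
    rw [LinearMap.mem_ker, hg, mem_span_range_X_iff, ← hcc, RingHom.comp_apply,
      ← mem_span_range_X_iff]
    exact Ideal.Quotient.eq_zero_iff_mem
  have hsurj : Function.Surjective g := by
    intro y
    obtain ⟨r, rfl⟩ := Ideal.Quotient.mk_surjective (I := Ideal.span (Set.range X)) y
    refine ⟨C (constantCoeff r), (hg _).trans (Ideal.Quotient.eq.2 ?_)⟩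
    rw [mem_span_range_X_iff]
    simp
  exact ⟨((Submodule.quotEquivOfEq _ _ hker).symm ≪≫ₗ
    g.quotKerEquivOfSurjective hsurj).toModuleIso.symm⟩

end ResidueField

/-- The Betti numbers of the ideal of pairwise products of a homogeneous regular sequence are those
of the ideal of pairwise products of the variables. -/
theorem torBetti_pairwise_products {K : Type} [Field K] {m n : ℕ} {ℓ : Fin n → ℕ}
    (hℓ : ∀ j, 0 < ℓ j) {L : (j : Fin n) → Fin (ℓ j) → MvPolynomial (Fin m) K}
    (hLhom : ∀ j i, (L j i).IsHomogeneous 1)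
    (hα : ∀ c : (j : Fin n) → Fin (ℓ j), LinearIndependent K fun j => L j (c j))
    {f : Fin n → MvPolynomial (Fin m) K} (hf : ∀ j, f j = ∏ i, L j i) (h : ℕ) :
    torBetti K m (Ideal.span {g | ∃ i j : Fin n, i < j ∧ g = f i * f j}) h =
      torBetti K n (Ideal.span {g | ∃ i j : Fin n, i < j ∧ g = X i * X j}) h := by
  have hhom : ∀ j, (f j).IsHomogeneous (ℓ j) := fun j => by
    rw [hf]
    simpa using IsHomogeneous.prod Finset.univ (L j) (fun _ => 1) fun i _ => hLhom j i
  have hreg : RegularModulo n ⊥ f := by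
    rw [funext hf]
    exact RegularModulo.prod hℓ fun c =>
      regularModulo_of_linearIndependent (fun j => hLhom j (c j)) (hα c)
  have hfree := free_of_regularModulo hℓ hhom hreg
  have hmap : Ideal.span {g | ∃ i j : Fin n, i < j ∧ g = f i * f j} =
      (Ideal.span {g : MvPolynomial (Fin n) K | ∃ i j : Fin n, i < j ∧ g = X i * X j}).map
        (aeval (R := K) f).toRingHom := by
    rw [Ideal.map_span]
    congr 1
    ext g
    constructor
    · rintro ⟨i, j, hij, rfl⟩
      exact ⟨X i * X j, ⟨i, j, hij, rfl⟩, by simp⟩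
    · rintro ⟨_, ⟨i, j, hij, rfl⟩, rfl⟩
      exact ⟨i, j, hij, by simp⟩
  obtain ⟨e⟩ := nonempty_residueField_iso (f := f) fun j => by
    rw [constantCoeff_eq]
    exact (hhom j).coeff_eq_zero (by simpa using (hℓ j).ne)
  rw [hmap]
  exact kdim_tor_eq_of_free (aeval (R := K) f) hfree _ e h

/-- For linear forms `L j i` in `R = K[x_0,…,x_n]` satisfying condition
(α), with `f j = ∏ i, L j i`, `I = (f_i f_j : i < j) ⊆ R` and
`Ω = (x_i^{ℓ_i} x_j^{ℓ_j} : i < j) ⊆ S = K[x_1,…,x_n]`, one has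
`dim_K Tor_h^R(R/I, R/𝔪_R) = dim_K Tor_h^S(S/Ω, S/𝔪_S)` for every `h ≥ 0`: the Betti
numbers of a complete grid or pseudo-grid coincide with those of `Ω`. -/
theorem betti_numbers_grid_eq_betti_numbers_omega
    (K : Type) [Field K] [Infinite K] (n : ℕ) (hn : 2 ≤ n)
    (ℓ : Fin n → ℕ) (hℓ : ∀ j, 0 < ℓ j)
    (L : (j : Fin n) → Fin (ℓ j) → MvPolynomial (Fin (n + 1)) K)
    (hLhom : ∀ j i, (L j i).IsHomogeneous 1)
    (hα : ∀ c : (j : Fin n) → Fin (ℓ j), LinearIndependent K (fun j => L j (c j)))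
    (f : Fin n → MvPolynomial (Fin (n + 1)) K)
    (hf : ∀ j, f j = ∏ i : Fin (ℓ j), L j i) :
    ∀ h : ℕ,
      torBetti K (n + 1)
          (Ideal.span {g : MvPolynomial (Fin (n + 1)) K |
            ∃ i j : Fin n, i < j ∧ g = f i * f j}) h =
        torBetti K n
          (Ideal.span {g : MvPolynomial (Fin n) K |
            ∃ i j : Fin n, i < j ∧ g = X i ^ ℓ i * X j ^ ℓ j}) h := by
  intro h
  rw [torBetti_pairwise_products hℓ hLhom hα hf]
  refine (torBetti_pairwise_products hℓ (L := fun j _ => X j) (fun j _ => isHomogeneous_X K j)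
    (fun _ => linearIndependent_X (Fin n) K) (fun j => ?_) h).symm
  simp
end
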